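/- Let β > 0 and q_n = e^{−β} β^n / n! for n ∈ ℕ. Let p : ℕ → [0,1] be nonincreasing, let n₀ ∈ ℕ and c > 0 be such that p_n = 0 for all n > n₀ and p_{n₀} ≥ c. Then Σ_{n∈ℕ} Σ_{m∈ℕ} q_n q_m p_{max(n,m)} ≤ (2/c) (Σ_{n∈ℕ} q_n p_n)². -/

import Mathlib

/-- The Poisson(β) probability mass function `q_n = e^{-β} β^n / n!`. -/
noncomputable def poissonPMF (β : ℝ) (n : ℕ) : ℝ := Real.exp (-β) * β ^ n / n.factorial

theorem poissonPMF_nonneg {β : ℝ} (hβ : 0 ≤ β) (n : ℕ) : 0 ≤ poissonPMF β n := by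
  unfold poissonPMF
  positivity

/-- An antitone nonnegative sequence that is at least `c` up to `n₀` and zero afterwards satisfies
`c * p (max n m) ≤ p n * p m`. -/
theorem mul_apply_max_le_mul {p : ℕ → ℝ} (hp : ∀ n, 0 ≤ p n) (hmono : Antitone p) {n₀ : ℕ} {c : ℝ}
    (hzero : ∀ n, n₀ < n → p n = 0) (hcn₀ : c ≤ p n₀) (n m : ℕ) :
    c * p (max n m) ≤ p n * p m := by
  wlog hnm : n ≤ m generalizing n m
  · rw [max_comm, mul_comm (p n)]
    exact this m n (le_of_not_ge hnm)
  rw [max_eq_right hnm]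
  rcases lt_or_ge n₀ m with hm | hm
  · simp [hzero m hm]
  · exact mul_le_mul_of_nonneg_right (hcn₀.trans (hmono (hnm.trans hm))) (hp m)

/-- Quantitative bound from the proof of Theorem 1: if the nonincreasing `p` vanishes
beyond `n₀` and `p_{n₀} ≥ c > 0`, then the second moment of the conditional Monte Carlo
estimator is at most `(2/c)` times the square of its mean. -/
theorem second_moment_CMC_le (β : ℝ) (hβ : 0 < β)
    (p : ℕ → ℝ) (hp01 : ∀ n, p n ∈ Set.Icc (0 : ℝ) 1) (hmono : Antitone p)
    (n₀ : ℕ) (c : ℝ) (hc : 0 < c)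
    (hzero : ∀ n, n₀ < n → p n = 0) (hcn₀ : c ≤ p n₀) :
    ∑' n : ℕ, ∑' m : ℕ, poissonPMF β n * poissonPMF β m * p (max n m) ≤
      (2 / c) * (∑' n : ℕ, poissonPMF β n * p n) ^ 2 := by
  have hp : ∀ n, 0 ≤ p n := fun n => (hp01 n).1
  have hmax : ∀ n m, n₀ < n ∨ n₀ < m → p (max n m) = 0 := fun n m h =>
    hzero _ (lt_max_iff.2 h)
  have hnot : ∀ n, n ∉ Finset.range (n₀ + 1) → n₀ < n := fun n hn => by
    simpa [Nat.succ_le_iff] using hn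
  have hinner : ∀ n, ∑' m : ℕ, poissonPMF β n * poissonPMF β m * p (max n m) =
      ∑ m ∈ Finset.range (n₀ + 1), poissonPMF β n * poissonPMF β m * p (max n m) := fun n =>
    tsum_eq_sum fun m hm => by rw [hmax n m (Or.inr (hnot m hm)), mul_zero]
  have hmean : ∑' n : ℕ, poissonPMF β n * p n =
      ∑ n ∈ Finset.range (n₀ + 1), poissonPMF β n * p n :=
    tsum_eq_sum fun n hn => by rw [hzero n (hnot n hn), mul_zero]
  simp_rw [hinner]
  rw [hmean, tsum_eq_sum (s := Finset.range (n₀ + 1)) fun n hn => Finset.sum_eq_zero fun m _ => by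
    rw [hmax n m (Or.inl (hnot n hn)), mul_zero]]
  calc ∑ n ∈ Finset.range (n₀ + 1), ∑ m ∈ Finset.range (n₀ + 1),
        poissonPMF β n * poissonPMF β m * p (max n m)
      ≤ ∑ n ∈ Finset.range (n₀ + 1), ∑ m ∈ Finset.range (n₀ + 1),
        1 / c * ((poissonPMF β n * p n) * (poissonPMF β m * p m)) := by
        refine Finset.sum_le_sum fun n _ => Finset.sum_le_sum fun m _ => ?_
        have hle : p (max n m) ≤ p n * p m / c := by
          rw [le_div_iff₀' hc]
          exact mul_apply_max_le_mul hp hmono hzero hcn₀ n m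
        calc poissonPMF β n * poissonPMF β m * p (max n m)
            ≤ poissonPMF β n * poissonPMF β m * (p n * p m / c) :=
              mul_le_mul_of_nonneg_left hle
                (mul_nonneg (poissonPMF_nonneg hβ.le n) (poissonPMF_nonneg hβ.le m))
          _ = 1 / c * ((poissonPMF β n * p n) * (poissonPMF β m * p m)) := by ring
    _ = 1 / c * (∑ n ∈ Finset.range (n₀ + 1), poissonPMF β n * p n) ^ 2 := by
        simp_rw [← Finset.mul_sum]
        rw [sq, Finset.sum_mul_sum]
        simp_rw [← Finset.mul_sum]
    _ ≤ 2 / c * (∑ n ∈ Finset.range (n₀ + 1), poissonPMF β n * p n) ^ 2 := by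
        gcongr
        norm_num
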